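/- For every natural number n ≥ 1, 2·c(n,n) equals the central binomial coefficient C(2n, n). -/

import Mathlib

/-!
Size bounds holes: `c n i = 0` for `i > n + 1`. On the two outermost diagonals the convolution
therefore keeps very few terms. On the diagonal `i = n + 1` it is Segner's recurrence, so
`c n (n + 1)` is the Catalan number `C_n` (`c_succ_diag`). On the diagonal `i = n` it reads
`c (n+1) (n+1) = C_n + 2 ∑ C_k c (n-k) (n-k)` (`c_diag_rec`). The numbers
`(centralBinom n - [n = 0]) / 2` satisfy the same recurrence because
`2 ∑ C_k centralBinom (n-k) = centralBinom (n+1)` (`two_mul_sum_catalan_mul_centralBinom`).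
-/

/-- `c n i` counts `i`-contexts (closed λ-terms with `i` holes) of size `n`. -/
def c : ℕ → ℕ → ℕ
  | 0, i => if i = 1 then 1 else 0
  | n+1, i => (∑ j ∈ Finset.Icc i (n+1), Nat.choose j i * c n j)
      + ∑ j ∈ Finset.range (i+1), ∑ k ∈ (Finset.range (n+1)).attach,
          c k.1 j * c (n - k.1) (i - j)
termination_by n _ => n
decreasing_by
  · exact Nat.lt_succ_self n
  · exact Finset.mem_range.mp k.2
  · exact Nat.lt_succ_of_le (Nat.sub_le n k.1)

open Finset.HasAntidiagonal (antidiagonal mem_antidiagonal)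

open Finset in
/-- The recurrence for `c` with the convolution written over antidiagonals. -/
theorem c_succ (n i : ℕ) : c (n + 1) i = (∑ j ∈ Icc i (n + 1), Nat.choose j i * c n j)
    + ∑ p ∈ antidiagonal n, ∑ q ∈ antidiagonal i, c p.1 q.1 * c p.2 q.2 := by
  rw [c, Finset.Nat.sum_antidiagonal_eq_sum_range_succ_mk, sum_comm,
    sum_attach (range (n + 1)) (fun k => ∑ j ∈ range (i + 1), c k j * c (n - k) (i - j))]
  simp only [Finset.Nat.sum_antidiagonal_eq_sum_range_succ_mk]

theorem c_eq_zero (n : ℕ) : ∀ i, n + 1 < i → c n i = 0 := by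
  induction n using Nat.strong_induction_on with
  | _ n ih =>
    intro i hi
    cases n with
    | zero => rw [c, if_neg (by omega)]
    | succ n =>
      rw [c_succ, Finset.Icc_eq_empty (by omega), Finset.sum_empty, zero_add]
      refine Finset.sum_eq_zero fun p hp => Finset.sum_eq_zero fun q hq => ?_
      rw [mem_antidiagonal] at hp hq
      by_cases h : p.1 + 1 < q.1
      · rw [ih p.1 (by omega) _ h, zero_mul]
      · rw [ih p.2 (by omega) q.2 (by omega), mul_zero]

theorem c_succ_diag (n : ℕ) : c n (n + 1) = catalan n := by
  induction n using Nat.strong_induction_on with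
  | _ n ih =>
    cases n with
    | zero => simp [c]
    | succ n =>
      rw [c_succ, Finset.Icc_eq_empty (by omega), Finset.sum_empty, zero_add, catalan_succ']
      refine Finset.sum_congr rfl fun p hp => ?_
      rw [mem_antidiagonal] at hp
      rw [Finset.sum_eq_single (p.1 + 1, p.2 + 1), ih p.1 (by omega), ih p.2 (by omega)]
      · rintro ⟨a, b⟩ hq hne
        rw [mem_antidiagonal] at hq
        simp only [ne_eq, Prod.mk.injEq] at hq hne ⊢
        by_cases h : p.1 + 1 < a
        · rw [c_eq_zero _ _ h, zero_mul]
        · rw [c_eq_zero p.2 b (by omega), mul_zero]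
      · intro h
        exact absurd (mem_antidiagonal.2 (by simp only; omega)) h

/-- A nonzero term `c p.1 q.1 * c p.2 q.2` has `q.1 ≤ p.1 + 1` and `q.2 ≤ p.2 + 1`; since the holes
total `n + 1`, exactly one of the two bounds is attained and the other is missed by one. -/
theorem c_diag_rec (n : ℕ) : c (n + 1) (n + 1) =
    catalan n + 2 * ∑ p ∈ antidiagonal n, catalan p.1 * c p.2 p.2 := by
  have key : ∀ p ∈ antidiagonal n,
      ∑ q ∈ antidiagonal (n + 1), c p.1 q.1 * c p.2 q.2 =
        catalan p.1 * c p.2 p.2 + catalan p.2 * c p.1 p.1 := by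
    intro p hp
    rw [mem_antidiagonal] at hp
    have hsub : ({(p.1 + 1, p.2), (p.1, p.2 + 1)} : Finset (ℕ × ℕ)) ⊆
        antidiagonal (n + 1) := by
      intro q hq
      simp only [Finset.mem_insert, Finset.mem_singleton] at hq
      rw [mem_antidiagonal]
      rcases hq with rfl | rfl <;> simp only <;> omega
    rw [← Finset.sum_subset hsub, Finset.sum_pair (by simp), c_succ_diag, c_succ_diag,
      mul_comm (c p.1 p.1)]
    rintro ⟨a, b⟩ hq hne
    rw [mem_antidiagonal] at hq
    simp only [Finset.mem_insert, Finset.mem_singleton, Prod.mk.injEq] at hq hne ⊢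
    by_cases h : p.1 + 1 < a
    · rw [c_eq_zero _ _ h, zero_mul]
    · rw [c_eq_zero p.2 b (by omega), mul_zero]
  have hswap := Finset.Nat.sum_antidiagonal_swap (n := n) (f := fun p => catalan p.1 * c p.2 p.2)
  simp only [Prod.fst_swap, Prod.snd_swap] at hswap
  rw [c_succ, Finset.sum_congr rfl key, Finset.sum_add_distrib, hswap, Finset.Icc_self,
    Finset.sum_singleton, Nat.choose_self, c_succ_diag]
  ring

/-- Since `centralBinom k = (k + 1) C_k`, averaging the sum with its reflection turns the weight
`n - k + 1` into `(n + 2) / 2`, and Segner's recurrence finishes. -/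
theorem two_mul_sum_catalan_mul_centralBinom (n : ℕ) :
    2 * ∑ p ∈ antidiagonal n, catalan p.1 * Nat.centralBinom p.2 =
      Nat.centralBinom (n + 1) := by
  have hswap := Finset.Nat.sum_antidiagonal_swap (n := n)
    (f := fun p => catalan p.1 * Nat.centralBinom p.2)
  simp only [Prod.fst_swap, Prod.snd_swap] at hswap
  rw [← succ_mul_catalan_eq_centralBinom (n + 1), catalan_succ', two_mul]
  nth_rewrite 1 [← hswap]
  rw [← Finset.sum_add_distrib, Finset.mul_sum]
  refine Finset.sum_congr rfl fun p hp => ?_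
  rw [mem_antidiagonal] at hp
  rw [← succ_mul_catalan_eq_centralBinom, ← succ_mul_catalan_eq_centralBinom, ← hp]
  ring

/-- The form of the theorem that also covers `n = 0`, where `c 0 0 = 0`. -/
theorem two_mul_c_add (n : ℕ) : 2 * c n n + (if n = 0 then 1 else 0) = Nat.centralBinom n := by
  induction n using Nat.strong_induction_on with
  | _ n ih =>
    cases n with
    | zero => simp [c]
    | succ n =>
      -- The summand `p = (n, 0)` accounts for the extra `catalan n` in `c_diag_rec`.
      have hδ : ∑ p ∈ antidiagonal n, catalan p.1 * (if p.2 = 0 then 1 else 0) =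
          catalan n := by
        rw [Finset.sum_eq_single (n, 0)]
        · simp
        · rintro ⟨a, b⟩ hq hne
          rw [mem_antidiagonal] at hq
          simp only [ne_eq, Prod.mk.injEq] at hq hne ⊢
          rw [if_neg (by omega), mul_zero]
        · intro h
          exact absurd (mem_antidiagonal.2 (by simp)) h
      have hsum : ∑ p ∈ antidiagonal n, catalan p.1 * Nat.centralBinom p.2 =
          2 * ∑ p ∈ antidiagonal n, catalan p.1 * c p.2 p.2 + catalan n := by
        rw [← hδ, Finset.mul_sum, ← Finset.sum_add_distrib]
        refine Finset.sum_congr rfl fun p hp => ?_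
        rw [mem_antidiagonal] at hp
        rw [← ih p.2 (by omega)]
        ring
      rw [← two_mul_sum_catalan_mul_centralBinom, hsum, c_diag_rec, if_neg (by omega)]
      ring

/-- For `n ≥ 1`, `2 * c n n` equals the central binomial coefficient `C(2n, n)`. -/
theorem two_mul_c (n : ℕ) (hn : 1 ≤ n) : 2 * c n n = Nat.choose (2 * n) n := by
  have h := two_mul_c_add n
  rwa [if_neg (by omega), add_zero, Nat.centralBinom_eq_two_mul_choose] at h
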